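/- There exists a constant C > 0 such that for every r ∈ (0, 1], every k ∈ Ω* with |k − K| ≥ r, and every m = (m₁, m₂) ∈ ℤ², one has |m₁k₁ + m₂k₂ + k − K| ≥ C·r·(1 + |m|), where |m| = √(m₁² + m₂²). -/

import Mathlib

/-!
Write `m₁k₁ + m₂k₂ + k - K = a k₁ + b k₂` with `a = m₁ + θ₁ - 1/3` and `b = m₂ + θ₂ + 1/3`.
Since `θ₁ - 1/3 ∈ [-5/6, 1/6]` and `θ₂ + 1/3 ∈ [-1/6, 5/6]` stay away from the nonzero integers,
`|a| ≥ |m₁|/6` and `|b| ≥ |m₂|/6` (`int_shift_sq`). The quadratic form of the lattice is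
`(16π²/3)(a² - ab + b²) ≥ 24 (a² + b²)` (`lattice_form_ge`), so the vector has norm at least
`|m|/2`, which is at least `(1 + |m|)/4` when `m ≠ 0`. For `m = 0` the hypothesis `|k - K| ≥ r`
gives the bound, and `C = 1/4` works throughout.
-/

noncomputable section

/-- Points of the plane. -/
abbrev Vec : Type := Fin 2 → ℝ

/-- The Euclidean norm on ℝ². -/
def enorm2 (x : Vec) : ℝ := Real.sqrt (x 0 ^ 2 + x 1 ^ 2)

/-- Dual lattice vector k₁. -/
def dualk₁ : Vec := (4 * Real.sqrt 3 * Real.pi / 3) • ![1 / 2, Real.sqrt 3 / 2]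

/-- Dual lattice vector k₂. -/
def dualk₂ : Vec := (4 * Real.sqrt 3 * Real.pi / 3) • ![1 / 2, -(Real.sqrt 3 / 2)]

/-- The high-symmetry point K = (k₁ − k₂)/3. -/
def Kpt : Vec := (3:ℝ)⁻¹ • (dualk₁ - dualk₂)

/-- The fundamental dual cell Ω*. -/
def dualCell : Set Vec :=
  {k | ∃ θ₁ ∈ Set.Icc (-(1/2) : ℝ) (1/2), ∃ θ₂ ∈ Set.Icc (-(1/2) : ℝ) (1/2),
    k = θ₁ • dualk₁ + θ₂ • dualk₂}

/-- A shift by at most `5/6` moves an integer no closer to `0` than a sixth of its modulus. -/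
lemma int_shift_sq (m : ℤ) (t : ℝ) (h : |t| ≤ 5 / 6) : (m : ℝ) ^ 2 ≤ 36 * (m + t) ^ 2 := by
  have key : |(m : ℝ)| ≤ 6 * |(m : ℝ) + t| := by
    rcases eq_or_ne m 0 with rfl | hm
    · simp
    · have h1 : (1 : ℝ) ≤ |(m : ℝ)| := by exact_mod_cast Int.one_le_abs hm
      have h2 : |(m : ℝ)| ≤ |(m : ℝ) + t| + |t| := by
        simpa using abs_sub ((m : ℝ) + t) t
      linarith
  have := pow_le_pow_left₀ (abs_nonneg _) key 2
  rw [mul_pow, sq_abs, sq_abs] at this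
  linarith

/-- Coercivity of the lattice quadratic form, which equals `(16π²/3)(a² - ab + b²)`. -/
lemma lattice_form_ge (v : Vec) (a b : ℝ) (hv : v = a • dualk₁ + b • dualk₂) :
    24 * (a ^ 2 + b ^ 2) ≤ v 0 ^ 2 + v 1 ^ 2 := by
  have h3 : Real.sqrt 3 ^ 2 = 3 := Real.sq_sqrt (by norm_num)
  have e : v 0 ^ 2 + v 1 ^ 2 = 16 * Real.pi ^ 2 / 3 * (a ^ 2 - a * b + b ^ 2) := by
    subst hv
    simp only [dualk₁, dualk₂, Pi.add_apply, Pi.smul_apply, smul_eq_mul, Matrix.cons_val_zero,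
      Matrix.cons_val_one]
    linear_combination (Real.pi ^ 2 * (4 / 9 * (a + b) ^ 2 +
      4 / 9 * (Real.sqrt 3 ^ 2 + 3) * (a - b) ^ 2)) * h3
  have hpi : (9 : ℝ) ≤ Real.pi ^ 2 := by nlinarith [Real.pi_gt_three]
  have hq : (a ^ 2 + b ^ 2) / 2 ≤ a ^ 2 - a * b + b ^ 2 := by nlinarith [sq_nonneg (a - b)]
  rw [e]
  nlinarith [sq_nonneg a, sq_nonneg b]

/-- There is C > 0 such that for every r ∈ (0,1], every
k ∈ Ω* with |k − K| ≥ r, and every m ∈ ℤ²,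
|m₁k₁ + m₂k₂ + k − K| ≥ C·r·(1 + |m|). -/
theorem stmt12 : ∃ C : ℝ, 0 < C ∧
    ∀ r ∈ Set.Ioc (0 : ℝ) 1, ∀ k ∈ dualCell, r ≤ enorm2 (k - Kpt) →
      ∀ m₁ m₂ : ℤ,
        C * r * (1 + Real.sqrt ((m₁ : ℝ) ^ 2 + (m₂ : ℝ) ^ 2)) ≤
          enorm2 ((m₁ : ℝ) • dualk₁ + (m₂ : ℝ) • dualk₂ + k - Kpt) := by
  refine ⟨1 / 4, by norm_num, ?_⟩
  rintro r ⟨hr0, hr1⟩ k ⟨s, ⟨hs, hs'⟩, t, ⟨ht, ht'⟩, rfl⟩ hk m₁ m₂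
  by_cases hm : m₁ = 0 ∧ m₂ = 0
  · obtain ⟨rfl, rfl⟩ := hm
    simp only [Int.cast_zero, zero_smul, zero_add]
    norm_num
    linarith
  set M := Real.sqrt ((m₁ : ℝ) ^ 2 + (m₂ : ℝ) ^ 2) with hM
  have hM2 : M ^ 2 = (m₁ : ℝ) ^ 2 + (m₂ : ℝ) ^ 2 := Real.sq_sqrt (by positivity)
  have hM1 : 1 ≤ M := by
    rw [hM, Real.one_le_sqrt]
    have : 0 < m₁ ^ 2 + m₂ ^ 2 := by
      rcases not_and_or.mp hm with h | h <;> positivity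
    exact_mod_cast this
  have ha := int_shift_sq m₁ (s - 1 / 3) (abs_le.mpr ⟨by linarith, by linarith⟩)
  have hb := int_shift_sq m₂ (t + 1 / 3) (abs_le.mpr ⟨by linarith, by linarith⟩)
  have hq := lattice_form_ge
    ((m₁ : ℝ) • dualk₁ + (m₂ : ℝ) • dualk₂ + (s • dualk₁ + t • dualk₂) - Kpt)
    (m₁ + (s - 1 / 3)) (m₂ + (t + 1 / 3)) (by rw [Kpt]; module)
  have hlow : M / 2 ≤
      enorm2 ((m₁ : ℝ) • dualk₁ + (m₂ : ℝ) • dualk₂ + (s • dualk₁ + t • dualk₂) - Kpt) := by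
    refine Real.le_sqrt_of_sq_le ?_
    nlinarith
  nlinarith
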